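/- If C is a convex polyhedron and n a fixed unit normal, then the truncated volume V(s) = vol(C ∩ H⁻(s,n)) is a piecewise cubic polynomial in s: on each interval between consecutive values of s at which the plane passes through a vertex of C, V is given by a single polynomial of degree at most 3. -/

import Mathlib

open MeasureTheory Real Bornology
open scoped RealInnerProductSpace

noncomputable abbrev E3 := EuclideanSpace ℝ (Fin 3)

/-!
For a generic linear cost on convex weights, every point of `convexHull ℝ (range v)` is the
barycentre of unique weights of least cost, and their support is affinely independent. The supports
of full size are therefore the simplices of a triangulation of the polytope, without new vertices.

On a simplex, suppose the affine function `f - t` takes values `p < 0 < q` at two vertices. The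
hyperplane through the other vertices and the zero of `f - t` on the edge joining these two cuts the
part `f ≤ t` of the simplex into two pieces. Moving one of the two vertices along the edge to the
zero of `f - t` identifies each piece, up to a constant factor for the volume, with the part of the
simplex on which a modification of `f - t`, vanishing at that vertex, is nonpositive. This expresses
the volume through the same problem with one nonzero value fewer, with coefficients `q / (q - p)`
and `-p / (q - p)` that are affine in `t`, as in the Cox–de Boor recursion for splines. By induction
the volume is a polynomial in `t` of degree at most the dimension as long as `t` passes no vertex.
-/

section Triangulation

open Module Set

variable {ι E : Type*} [Fintype ι]

/-- The linear relations `∑ i, c i • v i = 0` with `∑ i, c i = 0` among the points `v i`, `i ∈ I`,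
extended by zero outside `I`. -/
def affineRelations [AddCommGroup E] [Module ℝ E] (v : ι → E) (I : Finset ι) :
    Submodule ℝ (ι → ℝ) where
  carrier := {c | (∀ i ∉ I, c i = 0) ∧ ∑ i, c i = 0 ∧ Fintype.linearCombination ℝ v c = 0}
  zero_mem' := by simp
  add_mem' := by
    rintro c d ⟨hcI, hc, hcv⟩ ⟨hdI, hd, hdv⟩
    exact ⟨fun i hi ↦ by simp [hcI i hi, hdI i hi], by simp [Finset.sum_add_distrib, hc, hd],
      by rw [map_add, hcv, hdv, add_zero]⟩
  smul_mem' := by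
    rintro r c ⟨hcI, hc, hcv⟩
    exact ⟨fun i hi ↦ by simp [hcI i hi], by simp [← Finset.mul_sum, hc], by simp [hcv]⟩

/-- The points of the standard simplex whose coordinates outside `I` vanish. -/
def stdSimplexFace (I : Finset ι) : Set (ι → ℝ) :=
  {w ∈ stdSimplex ℝ ι | ∀ i ∉ I, w i = 0}

/-- The weights of least cost `L` among all convex weights on the points `v i` with the same
barycentre. -/
def optimalWeights [AddCommGroup E] [Module ℝ E] (v : ι → E) (L : Dual ℝ (ι → ℝ)) :
    Set (ι → ℝ) :=
  {w ∈ stdSimplex ℝ ι | ∀ u ∈ stdSimplex ℝ ι,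
    Fintype.linearCombination ℝ v u = Fintype.linearCombination ℝ v w → L w ≤ L u}

/-- A cost functional is generic for `v` if it is nonzero on some affine relation supported on `I`
as soon as there is a nonzero one. -/
def IsGenericCost [AddCommGroup E] [Module ℝ E] (v : ι → E) (L : Dual ℝ (ι → ℝ)) : Prop :=
  ∀ I : Finset ι, affineRelations v I ≤ LinearMap.ker L → affineRelations v I = ⊥

section Algebra

variable [AddCommGroup E] [Module ℝ E] {v : ι → E} {L : Dual ℝ (ι → ℝ)} {I J : Finset ι}
  {c u w : ι → ℝ}

lemma affineIndependent_of_affineRelations_eq_bot (h : affineRelations v I = ⊥) :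
    AffineIndependent ℝ fun i : I ↦ v i := by
  classical
  rw [affineIndependent_iff_of_fintype]
  intro c hc hcv
  rw [Finset.univ.weightedVSub_eq_linear_combination hc] at hcv
  let d : ι → ℝ := fun i ↦ if hi : i ∈ I then c ⟨i, hi⟩ else 0
  have hd_coe (i : I) : d i = c i := by simp [d]
  have hd_zero (i : ι) (hi : i ∉ I) : d i = 0 := by simp [d, hi]
  have hd : d ∈ affineRelations v I := by
    refine ⟨hd_zero, ?_, ?_⟩
    · rw [← Finset.sum_subset I.subset_univ fun i _ hi ↦ hd_zero i hi, ← Finset.sum_coe_sort]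
      simpa only [hd_coe] using hc
    · rw [Fintype.linearCombination_apply, ← Finset.sum_subset I.subset_univ
        fun i _ hi ↦ by rw [hd_zero i hi, zero_smul], ← Finset.sum_coe_sort]
      simpa only [hd_coe] using hcv
  rw [h, Submodule.mem_bot] at hd
  intro i
  rw [← hd_coe, hd, Pi.zero_apply]

lemma exists_isGenericCost (v : ι → E) : ∃ L, IsGenericCost v L := by
  have hex (I : {I : Finset ι // affineRelations v I ≠ ⊥}) : ∃ c ∈ affineRelations v I, c ≠ 0 :=
    Submodule.exists_mem_ne_zero_of_ne_bot I.2
  choose c hc hc0 using hex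
  obtain ⟨L, hL⟩ := exists_dual_forall_apply_ne_zero (K := ℝ) c hc0
  refine ⟨L, fun I hI ↦ ?_⟩
  by_contra hne
  exact hL ⟨I, hne⟩ (hI (hc ⟨I, hne⟩))

lemma convexHull_image_eq_image_stdSimplexFace (v : ι → E) (I : Finset ι) :
    convexHull ℝ (v '' I) = Fintype.linearCombination ℝ v '' stdSimplexFace I := by
  classical
  apply Subset.antisymm
  · refine convexHull_min ?_ (Convex.linear_image ?_ _)
    · rintro _ ⟨i, hi, rfl⟩
      refine ⟨Pi.single i 1, ⟨single_mem_stdSimplex ℝ i, fun j hj ↦ ?_⟩, by simp⟩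
      exact Pi.single_eq_of_ne (ne_of_mem_of_not_mem hi hj).symm _
    · rintro w ⟨hw, hwI⟩ u ⟨hu, huI⟩ p q hp hq hpq
      exact ⟨convex_stdSimplex ℝ ι hw hu hp hq hpq, fun i hi ↦ by simp [hwI i hi, huI i hi]⟩
  · rintro _ ⟨w, ⟨⟨hw0, hw1⟩, hwI⟩, rfl⟩
    rw [Fintype.linearCombination_apply, ← Finset.sum_subset I.subset_univ
      fun i _ hi ↦ by rw [hwI i hi, zero_smul]]
    refine (convex_convexHull ℝ _).sum_mem (fun i _ ↦ hw0 i) ?_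
      fun i hi ↦ subset_convexHull ℝ _ (mem_image_of_mem v hi)
    rw [← hw1]
    exact Finset.sum_subset I.subset_univ fun i _ hi ↦ hwI i hi

lemma exists_pos_add_smul_mem_stdSimplex (hw : w ∈ stdSimplex ℝ ι) (hc : ∑ i, c i = 0)
    (h0 : ∀ i, w i = 0 → 0 ≤ c i) : ∃ ε : ℝ, 0 < ε ∧ w + ε • c ∈ stdSimplex ℝ ι := by
  have hev (i : ι) : ∀ᶠ ε : ℝ in nhdsWithin 0 (Ioi 0), 0 ≤ w i + ε * c i := by
    rcases (hw.1 i).eq_or_lt with hi | hi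
    · filter_upwards [self_mem_nhdsWithin] with ε hε
      rw [← hi, zero_add]
      exact mul_nonneg (le_of_lt hε) (h0 i hi.symm)
    · have hcont : Continuous fun ε : ℝ ↦ w i + ε * c i := by fun_prop
      filter_upwards [nhdsWithin_le_nhds (hcont.tendsto 0 |>.eventually_const_lt (by simpa))]
        with ε hε using hε.le
  obtain ⟨ε, hε, hε0⟩ := ((Filter.eventually_all.2 hev).and self_mem_nhdsWithin).exists
  refine ⟨ε, hε0, hε, ?_⟩
  simp [Finset.sum_add_distrib, ← Finset.mul_sum, hw.2, hc]

lemma cost_nonneg_of_mem_optimalWeights (hw : w ∈ optimalWeights v L) (hc : ∑ i, c i = 0)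
    (hcv : Fintype.linearCombination ℝ v c = 0) (h0 : ∀ i, w i = 0 → 0 ≤ c i) : 0 ≤ L c := by
  obtain ⟨ε, hε, hmem⟩ := exists_pos_add_smul_mem_stdSimplex hw.1 hc h0
  have hle := hw.2 _ hmem (by simp [hcv])
  rw [map_add, map_smul, smul_eq_mul, le_add_iff_nonneg_right] at hle
  exact nonneg_of_mul_nonneg_right hle hε

lemma affineRelations_support_eq_bot (hL : IsGenericCost v L) (hw : w ∈ optimalWeights v L) :
    affineRelations v {i | w i ≠ 0} = ⊥ := by
  refine hL _ fun c hc ↦ LinearMap.mem_ker.2 ?_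
  have nonneg {d : ι → ℝ} (hd : d ∈ affineRelations v {i | w i ≠ 0}) : 0 ≤ L d :=
    cost_nonneg_of_mem_optimalWeights hw hd.2.1 hd.2.2
      fun i hi ↦ (hd.1 i (by simpa using hi)).ge
  have hneg := nonneg (neg_mem hc)
  rw [map_neg] at hneg
  linarith [nonneg hc]

lemma mem_optimalWeights_of_mem_stdSimplexFace_support (hw : w ∈ optimalWeights v L)
    (hu : u ∈ stdSimplexFace {i | w i ≠ 0}) : u ∈ optimalWeights v L := by
  refine ⟨hu.1, fun u' hu' huu' ↦ ?_⟩
  have h : 0 ≤ L (u' - u) := by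
    refine cost_nonneg_of_mem_optimalWeights hw ?_ (by rw [map_sub, huu', sub_self]) fun i hi ↦ ?_
    · simp [Finset.sum_sub_distrib, hu'.2, hu.1.2]
    · simpa [hu.2 i (by simpa using hi)] using hu'.1 i
  rwa [map_sub, sub_nonneg] at h

lemma eq_of_mem_optimalWeights (hL : IsGenericCost v L) (hw : w ∈ optimalWeights v L)
    (hu : u ∈ optimalWeights v L)
    (h : Fintype.linearCombination ℝ v w = Fintype.linearCombination ℝ v u) : w = u := by
  have hcost : L w = L u := le_antisymm (hw.2 u hu.1 h.symm) (hu.2 w hw.1 h)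
  let m : ι → ℝ := (1 / 2 : ℝ) • w + (1 / 2 : ℝ) • u
  have hm : m ∈ optimalWeights v L := by
    refine ⟨convex_stdSimplex ℝ ι hw.1 hu.1 (by norm_num) (by norm_num) (by norm_num),
      fun u' hu' hmu' ↦ ?_⟩
    have hmid : L m = L w := by simp only [m, map_add, map_smul, smul_eq_mul, ← hcost]; ring
    rw [hmid]
    refine hw.2 u' hu' (hmu'.trans ?_)
    simp only [m, map_add, map_smul, ← h, ← add_smul]
    norm_num
  have hsub : w - u ∈ affineRelations v {i | m i ≠ 0} := by
    refine ⟨fun i hi ↦ ?_, by simp [Finset.sum_sub_distrib, hw.1.2, hu.1.2],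
      by rw [map_sub, h, sub_self]⟩
    have hmi : 1 / 2 * w i + 1 / 2 * u i = 0 := by simpa [m] using hi
    rw [Pi.sub_apply]
    linarith [hw.1.1 i, hu.1.1 i]
  rw [affineRelations_support_eq_bot hL hm, Submodule.mem_bot] at hsub
  exact sub_eq_zero.1 hsub

/-- The face of the standard simplex over `I` consists of optimal weights; for a generic cost the
convex hulls of the `v '' I` over all such `I` are the cells of a regular triangulation. -/
def IsOptimalFace (v : ι → E) (L : Dual ℝ (ι → ℝ)) (I : Finset ι) : Prop :=
  stdSimplexFace I ⊆ optimalWeights v L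

lemma convexHull_inter_convexHull_subset [DecidableEq ι] (hL : IsGenericCost v L)
    (hI : IsOptimalFace v L I) (hJ : IsOptimalFace v L J) :
    convexHull ℝ (v '' I) ∩ convexHull ℝ (v '' J) ⊆ convexHull ℝ (v '' ↑(I ∩ J)) := by
  simp only [convexHull_image_eq_image_stdSimplexFace]
  rintro _ ⟨⟨w, hw, rfl⟩, ⟨u, hu, huw⟩⟩
  obtain rfl := eq_of_mem_optimalWeights hL (hI hw) (hJ hu) huw.symm
  refine ⟨w, ⟨hw.1, fun i hi ↦ ?_⟩, rfl⟩
  by_cases hiI : i ∈ I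
  · exact hu.2 i fun hiJ ↦ hi (Finset.mem_inter.2 ⟨hiI, hiJ⟩)
  · exact hw.2 i hiI

end Algebra

section Topology

variable [NormedAddCommGroup E] [NormedSpace ℝ E] {v : ι → E} {L : Dual ℝ (ι → ℝ)} {I J : Finset ι}

lemma exists_mem_optimalWeights (L : Dual ℝ (ι → ℝ)) {x : E} (hx : x ∈ convexHull ℝ (range v)) :
    ∃ w ∈ optimalWeights v L, Fintype.linearCombination ℝ v w = x := by
  rw [← image_univ, ← Finset.coe_univ, convexHull_image_eq_image_stdSimplexFace] at hx
  obtain ⟨w₀, hw₀, hw₀x⟩ := hx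
  have hcont : Continuous (Fintype.linearCombination ℝ v) :=
    LinearMap.continuous_of_finiteDimensional _
  have hcompact : IsCompact (stdSimplex ℝ ι ∩ Fintype.linearCombination ℝ v ⁻¹' {x}) :=
    (isCompact_stdSimplex ℝ ι).inter_right (isClosed_singleton.preimage hcont)
  obtain ⟨w, ⟨hw, hwx⟩, hmin⟩ := hcompact.exists_isMinOn ⟨w₀, hw₀.1, hw₀x⟩
    (LinearMap.continuous_of_finiteDimensional L).continuousOn
  exact ⟨w, ⟨hw, fun u hu huw ↦ hmin ⟨hu, huw.trans hwx⟩⟩, hwx⟩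

lemma exists_isOptimalFace_mem_convexHull (hL : IsGenericCost v L) {x : E}
    (hx : x ∈ convexHull ℝ (range v)) :
    ∃ I, IsOptimalFace v L I ∧ AffineIndependent ℝ (fun i : I ↦ v i) ∧
      x ∈ convexHull ℝ (v '' I) := by
  obtain ⟨w, hw, rfl⟩ := exists_mem_optimalWeights L hx
  refine ⟨({i | w i ≠ 0} : Finset ι), fun u ↦ mem_optimalWeights_of_mem_stdSimplexFace_support hw,
    affineIndependent_of_affineRelations_eq_bot (affineRelations_support_eq_bot hL hw), ?_⟩
  rw [convexHull_image_eq_image_stdSimplexFace]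
  exact ⟨w, ⟨hw.1, by simp⟩, rfl⟩

end Topology

lemma measure_convexHull_image_eq_zero_of_card_le {ι E : Type*} [NormedAddCommGroup E]
    [NormedSpace ℝ E] [FiniteDimensional ℝ E] [MeasurableSpace E] [BorelSpace E] (μ : Measure E)
    [μ.IsAddHaarMeasure] (v : ι → E) {I : Finset ι} (hI : I.card ≤ finrank ℝ E) :
    μ (convexHull ℝ (v '' I)) = 0 := by
  classical
  refine measure_mono_null (convexHull_subset_affineSpan _)
    (Measure.addHaar_affineSubspace μ _ fun htop ↦ ?_)
  rcases I.eq_empty_or_nonempty with rfl | hne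
  · simp at htop
  · have hpos := hne.card_pos
    have hle := finrank_vectorSpan_image_finset_le ℝ v I (n := I.card - 1) (by omega)
    rw [Finset.coe_image, ← direction_affineSpan, htop, AffineSubspace.direction_top,
      finrank_top] at hle
    omega

theorem exists_ae_triangulation {ι E : Type*} [Finite ι] [NormedAddCommGroup E] [NormedSpace ℝ E]
    [FiniteDimensional ℝ E] [MeasurableSpace E] [BorelSpace E] (μ : Measure E)
    [μ.IsAddHaarMeasure] (v : ι → E) : ∃ T : Finset (Finset ι),
    (∀ I ∈ T, I.card = finrank ℝ E + 1 ∧ AffineIndependent ℝ fun i : I ↦ v i) ∧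
    (T : Set (Finset ι)).Pairwise
      (Function.onFun (AEDisjoint μ) fun I : Finset ι ↦ convexHull ℝ (v '' I)) ∧
    convexHull ℝ (range v) =ᵐ[μ] ⋃ I ∈ T, convexHull ℝ (v '' I) := by
  classical
  cases nonempty_fintype ι
  obtain ⟨L, hL⟩ := exists_isGenericCost v
  let T : Finset (Finset ι) := {I | I.card = finrank ℝ E + 1 ∧
    AffineIndependent ℝ (fun i : I ↦ v i) ∧ IsOptimalFace v L I}
  have mem_T {I : Finset ι} : I ∈ T ↔ I.card = finrank ℝ E + 1 ∧
      AffineIndependent ℝ (fun i : I ↦ v i) ∧ IsOptimalFace v L I := by simp [T]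
  refine ⟨T, fun I hI ↦ ⟨(mem_T.1 hI).1, (mem_T.1 hI).2.1⟩, fun I hI J hJ hIJ ↦ ?_, ?_⟩
  · obtain ⟨hIcard, -, hIopt⟩ := mem_T.1 hI
    obtain ⟨hJcard, -, hJopt⟩ := mem_T.1 hJ
    refine measure_mono_null (convexHull_inter_convexHull_subset hL hIopt hJopt)
      (measure_convexHull_image_eq_zero_of_card_le μ v ?_)
    have hssubset : I ∩ J ⊂ I := Finset.inter_subset_left.ssubset_of_ne fun h ↦
      hIJ (Finset.eq_of_subset_of_card_le (Finset.inter_eq_left.1 h) (by omega))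
    have hcard := Finset.card_lt_card hssubset
    omega
  · refine Filter.EventuallyLE.antisymm (ae_le_set.2 ?_)
      (iUnion₂_subset fun I _ ↦ convexHull_mono (image_subset_range _ _)).eventuallyLE
    have hnull : μ (⋃ I ∈ ({I | I.card ≤ finrank ℝ E} : Set (Finset ι)),
        convexHull ℝ (v '' I)) = 0 :=
      (measure_biUnion_null_iff (toFinite _).countable).2
        fun I hI ↦ measure_convexHull_image_eq_zero_of_card_le μ v hI
    refine measure_mono_null (fun x ⟨hx, hxT⟩ ↦ ?_) hnull
    obtain ⟨I, hIopt, hind, hxI⟩ := exists_isOptimalFace_mem_convexHull hL hx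
    refine mem_biUnion (x := I) (Nat.le_of_lt_succ (lt_of_le_of_ne ?_ fun hcard ↦ hxT ?_)) hxI
    · rw [← Fintype.card_coe]
      exact hind.card_le_finrank_succ.trans (Nat.succ_le_succ (Submodule.finrank_le _))
    · exact mem_biUnion (mem_T.2 ⟨hcard, hind, hIopt⟩) hxI

end Triangulation

section PolynomialOn

/-- `F` agrees on `s` with a polynomial of degree at most `d`. -/
def IsPolynomialOn (d : ℕ) (s : Set ℝ) (F : ℝ → ℝ) : Prop :=
  ∃ p : Polynomial ℝ, p.natDegree ≤ d ∧ ∀ t ∈ s, F t = p.eval t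

namespace IsPolynomialOn

variable {d e : ℕ} {s : Set ℝ} {F G : ℝ → ℝ}

lemma congr (hF : IsPolynomialOn d s F) (h : Set.EqOn G F s) : IsPolynomialOn d s G := by
  obtain ⟨p, hp, hFp⟩ := hF
  exact ⟨p, hp, fun t ht ↦ (h ht).trans (hFp t ht)⟩

lemma const (d : ℕ) (s : Set ℝ) (c : ℝ) : IsPolynomialOn d s fun _ ↦ c :=
  ⟨Polynomial.C c, by simp, by simp⟩

lemma id_sub_const (s : Set ℝ) (c : ℝ) : IsPolynomialOn 1 s fun t ↦ t - c :=
  ⟨Polynomial.X - Polynomial.C c, Polynomial.natDegree_X_sub_C_le c, by simp⟩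

lemma add (hF : IsPolynomialOn d s F) (hG : IsPolynomialOn d s G) :
    IsPolynomialOn d s fun t ↦ F t + G t := by
  obtain ⟨p, hp, hFp⟩ := hF
  obtain ⟨q, hq, hGq⟩ := hG
  exact ⟨p + q, Polynomial.natDegree_add_le_of_degree_le hp hq,
    fun t ht ↦ by simp only [Polynomial.eval_add, hFp t ht, hGq t ht]⟩

lemma mul (hF : IsPolynomialOn d s F) (hG : IsPolynomialOn e s G) :
    IsPolynomialOn (d + e) s fun t ↦ F t * G t := by
  obtain ⟨p, hp, hFp⟩ := hF
  obtain ⟨q, hq, hGq⟩ := hG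
  exact ⟨p * q, Polynomial.natDegree_mul_le_of_le hp hq,
    fun t ht ↦ by simp only [Polynomial.eval_mul, hFp t ht, hGq t ht]⟩

lemma const_mul (c : ℝ) (hF : IsPolynomialOn d s F) : IsPolynomialOn d s fun t ↦ c * F t := by
  simpa only [zero_add] using (const 0 s c).mul hF

lemma sum {κ : Type*} {T : Finset κ} {F : κ → ℝ → ℝ} (h : ∀ i ∈ T, IsPolynomialOn d s (F i)) :
    IsPolynomialOn d s fun t ↦ ∑ i ∈ T, F i t := by
  classical
  induction T using Finset.induction_on with
  | empty => simpa using const d s 0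
  | insert i T hi ih =>
    simp only [Finset.sum_insert hi]
    exact (h i (T.mem_insert_self i)).add (ih fun j hj ↦ h j (Finset.mem_insert_of_mem hj))

lemma closure (hF : IsPolynomialOn d s F) (hcont : Continuous F) :
    IsPolynomialOn d (closure s) F := by
  obtain ⟨p, hp, hFp⟩ := hF
  exact ⟨p, hp, Set.EqOn.closure hFp hcont p.continuous⟩

end IsPolynomialOn

end PolynomialOn

section Simplex

open Module Set

section SlideVertex

variable {ι E : Type*} [AddCommGroup E] [Module ℝ E]

/-- The affine map fixing the vertices other than `B i` of the simplex with vertices `B` and moving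
`B i` to the point `B i + r • (B j - B i)` of the line through `B i` and `B j`. -/
noncomputable def slideVertex (B : AffineBasis ι ℝ E) (i j : ι) (r : ℝ) : E →ᵃ[ℝ] E where
  toFun x := x + B.coord i x • r • (B j - B i)
  linear := LinearMap.transvection (B.coord i).linear (r • (B j - B i))
  map_vadd' x y := by
    rw [AffineMap.map_vadd, LinearMap.transvection.apply]
    simp only [vadd_eq_add, add_smul]
    abel

variable (B : AffineBasis ι ℝ E) {i j : ι} (r : ℝ)

lemma coord_slideVertex [DecidableEq ι] (i j k : ι) (x : E) : B.coord k (slideVertex B i j r x) =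
    B.coord k x + B.coord i x * r * ((if k = j then 1 else 0) - if k = i then 1 else 0) := by
  have h : slideVertex B i j r x = (B.coord i x * r) • (B j - B i) +ᵥ x := by
    rw [vadd_eq_add, add_comm, mul_smul]
    rfl
  rw [h, AffineMap.map_vadd, map_smul, ← vsub_eq_sub, AffineMap.linearMap_vsub, B.coord_apply,
    B.coord_apply, vsub_eq_sub, smul_eq_mul, vadd_eq_add, add_comm]

lemma coord_left_slideVertex (hij : i ≠ j) (x : E) :
    B.coord i (slideVertex B i j r x) = (1 - r) * B.coord i x := by
  classical
  rw [coord_slideVertex, if_neg hij, if_pos rfl]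
  ring

lemma coord_right_slideVertex (hij : i ≠ j) (x : E) :
    B.coord j (slideVertex B i j r x) = B.coord j x + r * B.coord i x := by
  classical
  rw [coord_slideVertex, if_neg hij.symm, if_pos rfl]
  ring

lemma coord_slideVertex_of_ne {k : ι} (hki : k ≠ i) (hkj : k ≠ j) (x : E) :
    B.coord k (slideVertex B i j r x) = B.coord k x := by
  classical
  rw [coord_slideVertex, if_neg hki, if_neg hkj, sub_zero, mul_zero, add_zero]

lemma forall_coord_slideVertex_nonneg_iff (hij : i ≠ j) {r : ℝ} (hr : r ∈ Ico (0 : ℝ) 1) (x : E) :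
    (∀ k, 0 ≤ B.coord k (slideVertex B i j r x)) ∧ 0 ≤ B.coord j x ↔
      ∀ k, 0 ≤ B.coord k x := by
  have hr1 : 0 < 1 - r := sub_pos.2 hr.2
  refine ⟨fun ⟨h, hj⟩ k ↦ ?_, fun h ↦ ⟨fun k ↦ ?_, h j⟩⟩ <;> rcases eq_or_ne k i with rfl | hki
  · exact nonneg_of_mul_nonneg_right (coord_left_slideVertex B r hij x ▸ h k) hr1
  · rcases eq_or_ne k j with rfl | hkj
    · exact hj
    · exact coord_slideVertex_of_ne B r hki hkj x ▸ h k
  · exact coord_left_slideVertex B r hij x ▸ mul_nonneg hr1.le (h k)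
  · rcases eq_or_ne k j with rfl | hkj
    · exact coord_right_slideVertex B r hij x ▸ add_nonneg (h k) (mul_nonneg hr.1 (h i))
    · exact (coord_slideVertex_of_ne B r hki hkj x).symm ▸ h k

lemma det_linear_slideVertex [FiniteDimensional ℝ E] (hij : i ≠ j) :
    (slideVertex B i j r).linear.det = 1 - r := by
  have hcoord : (B.coord i).linear (B j - B i) = -1 := by
    rw [← vsub_eq_sub, AffineMap.linearMap_vsub, B.coord_apply_ne hij, B.coord_apply_eq,
      vsub_eq_sub, zero_sub]
  simp only [slideVertex, LinearMap.transvection.det, map_smul, hcoord, smul_eq_mul]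
  ring

end SlideVertex

section SimplexSublevel

section OrderedField

variable {K : Type*} [Field K] [LinearOrder K] [IsStrictOrderedRing K] {x y : K}

lemma ne_of_mul_neg (h : x * y < 0) : x ≠ y := by
  rintro rfl
  exact (mul_self_nonneg x).not_gt h

lemma div_sub_mem_Ioo_of_mul_neg (h : x * y < 0) : x / (x - y) ∈ Ioo (0 : K) 1 := by
  rcases mul_neg_iff.1 h with ⟨hx, hy⟩ | ⟨hx, hy⟩
  · exact ⟨div_pos hx (by linarith), (div_lt_one (by linarith)).2 (by linarith)⟩
  · exact ⟨div_pos_of_neg_of_neg hx (by linarith),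
      (div_lt_one_of_neg (by linarith)).2 (by linarith)⟩

end OrderedField

lemma sum_mul_update_zero {ι R : Type*} [Fintype ι] [DecidableEq ι] [Ring R] (c g : ι → R) (i : ι) :
    ∑ k, c k * Function.update g i 0 k = ∑ k, c k * g k - c i * g i := by
  rw [← Finset.add_sum_erase _ _ (Finset.mem_univ i), ← Finset.add_sum_erase _ (fun k ↦ c k * g k)
    (Finset.mem_univ i), Function.update_self, mul_zero, zero_add, add_sub_cancel_left]
  exact Finset.sum_congr rfl fun k hk ↦ by rw [Function.update_of_ne (Finset.ne_of_mem_erase hk)]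

variable {ι E : Type*} [Fintype ι] [AddCommGroup E] [Module ℝ E]

/-- The part of the simplex with vertices `B` on which the affine function with values `g` at the
vertices is nonpositive. -/
def simplexSublevel (B : AffineBasis ι ℝ E) (g : ι → ℝ) : Set E :=
  {x | (∀ i, 0 ≤ B.coord i x) ∧ ∑ i, B.coord i x * g i ≤ 0}

lemma sum_coord_slideVertex_mul (B : AffineBasis ι ℝ E) (i j : ι) (r : ℝ) (g : ι → ℝ) (x : E) :
    ∑ k, B.coord k (slideVertex B i j r x) * g k =
      ∑ k, B.coord k x * g k + B.coord i x * r * (g j - g i) := by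
  classical
  simp only [coord_slideVertex, add_mul, mul_assoc, sub_mul, ite_mul, one_mul, zero_mul,
    Finset.sum_add_distrib, ← Finset.mul_sum, Finset.sum_sub_distrib, Finset.sum_ite_eq',
    Finset.mem_univ, if_true]

lemma slideVertex_preimage_simplexSublevel_inter [DecidableEq ι] (B : AffineBasis ι ℝ E) {i j : ι}
    {g : ι → ℝ} (hg : g i * g j < 0) :
    slideVertex B i j (g i / (g i - g j)) ⁻¹'
        (simplexSublevel B g ∩ {x | 0 ≤ g j * (B.coord i x * g i + B.coord j x * g j)}) =
      simplexSublevel B (Function.update g i 0) := by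
  obtain ⟨hr0, hr1⟩ := div_sub_mem_Ioo_of_mul_neg hg
  have hij : i ≠ j := ne_of_apply_ne g (ne_of_mul_neg hg)
  set r : ℝ := g i / (g i - g j)
  have hr : r * (g i - g j) = g i := div_mul_cancel₀ _ (sub_ne_zero.2 (ne_of_mul_neg hg))
  ext x
  have hsum : ∑ k, B.coord k (slideVertex B i j r x) * g k =
      ∑ k, B.coord k x * Function.update g i 0 k := by
    rw [sum_coord_slideVertex_mul, sum_mul_update_zero]
    linear_combination -(B.coord i x) * hr
  have hedge : g j * (B.coord i (slideVertex B i j r x) * g i +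
      B.coord j (slideVertex B i j r x) * g j) = g j ^ 2 * B.coord j x := by
    rw [coord_left_slideVertex B r hij, coord_right_slideVertex B r hij]
    linear_combination -(g j * B.coord i x) * hr
  simp only [simplexSublevel, mem_preimage, mem_inter_iff, mem_ofPred_eq, hsum, hedge,
    mul_nonneg_iff_of_pos_left (sq_pos_of_ne_zero (right_ne_zero_of_mul hg.ne)),
    ← forall_coord_slideVertex_nonneg_iff B hij ⟨hr0.le, hr1⟩ x]
  tauto

lemma simplexSublevel_of_nonpos (B : AffineBasis ι ℝ E) {g : ι → ℝ} (hg : ∀ i, g i ≤ 0) :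
    simplexSublevel B g = convexHull ℝ (range B) := by
  rw [B.convexHull_eq_nonneg_coord]
  ext x
  exact and_iff_left_of_imp fun hx ↦
    Finset.sum_nonpos fun i _ ↦ mul_nonpos_of_nonneg_of_nonpos (hx i) (hg i)

lemma simplexSublevel_comp_sub (B : AffineBasis ι ℝ E) (f : E →ᵃ[ℝ] ℝ) (t : ℝ) :
    simplexSublevel B (fun i ↦ f (B i) - t) = convexHull ℝ (range B) ∩ {x | f x ≤ t} := by
  rw [B.convexHull_eq_nonneg_coord]
  ext x
  have hf : f x = ∑ i, B.coord i x * f (B i) := by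
    conv_lhs => rw [← B.affineCombination_coord_eq_self x]
    rw [Finset.map_affineCombination _ _ _ (B.sum_coord_apply_eq_one x),
      Finset.affineCombination_eq_linear_combination _ _ _ (B.sum_coord_apply_eq_one x)]
    rfl
  refine and_congr_right fun _ ↦ ?_
  simp only [mul_sub, Finset.sum_sub_distrib, ← Finset.sum_mul, B.sum_coord_apply_eq_one, one_mul,
    ← hf, sub_nonpos, mem_ofPred_eq]

end SimplexSublevel

lemma isCompact_simplexSublevel {ι E : Type*} [Fintype ι] [NormedAddCommGroup E] [NormedSpace ℝ E]
    [FiniteDimensional ℝ E] (B : AffineBasis ι ℝ E) (g : ι → ℝ) :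
    IsCompact (simplexSublevel B g) := by
  have hB : IsCompact {x | ∀ i, 0 ≤ B.coord i x} := by
    rw [← B.convexHull_eq_nonneg_coord]
    exact (finite_range B).isCompact_convexHull ℝ
  have hcont (i : ι) : Continuous (B.coord i) := AffineMap.continuous_of_finiteDimensional _
  exact hB.inter_right (isClosed_le (continuous_finsetSum _ fun i _ ↦ (hcont i).mul_const _)
    continuous_const)

section Measure

variable {E : Type*} [NormedAddCommGroup E] [NormedSpace ℝ E] [FiniteDimensional ℝ E]
  [MeasurableSpace E] [BorelSpace E] (μ : Measure E) [μ.IsAddHaarMeasure]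

lemma addHaar_preimage_affineMap {A : E →ᵃ[ℝ] E} (hA : A.linear.det ≠ 0) (s : Set E) :
    μ (A ⁻¹' s) = ENNReal.ofReal |A.linear.det⁻¹| * μ s := by
  have h : A ⁻¹' s = A.linear ⁻¹' ((· + A 0) ⁻¹' s) := by
    ext x
    rw [mem_preimage, mem_preimage, mem_preimage, A.decomp, Pi.add_apply]
    simp
  rw [h, Measure.addHaar_preimage_linearMap μ hA, measure_preimage_add_right]

lemma measure_affineMap_fiber_eq_zero {f : E →ᵃ[ℝ] ℝ} {t : ℝ} (h : ∃ x, f x ≠ t) :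
    μ {x | f x = t} = 0 := by
  obtain ⟨x, hx⟩ := h
  let S : AffineSubspace ℝ E := (AffineSubspace.mk' t ⊥).comap f
  have hS : (S : Set E) = {x | f x = t} := by
    ext x
    simp [S, AffineSubspace.mem_mk', sub_eq_zero]
  rw [← hS]
  refine Measure.addHaar_affineSubspace μ S fun htop ↦ hx ?_
  have hxS : x ∈ (S : Set E) := by simp [htop]
  rwa [hS] at hxS

lemma measureReal_inter_nonneg_add_inter_nonpos {f : E →ᵃ[ℝ] ℝ} (hf : ∃ x, f x ≠ 0) {s : Set E}
    (hs : μ s ≠ ⊤) :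
    μ.real (s ∩ {x | 0 ≤ f x}) + μ.real (s ∩ {x | f x ≤ 0}) = μ.real s := by
  have hcont : Continuous f := AffineMap.continuous_of_finiteDimensional f
  have hmeas : MeasurableSet {x | 0 ≤ f x} := measurableSet_le measurable_const hcont.measurable
  rw [← measureReal_inter_add_sdiff hmeas hs]
  congr 1
  refine measureReal_congr ?_
  filter_upwards [measure_eq_zero_iff_ae_notMem.1 (measure_affineMap_fiber_eq_zero μ hf)] with x hx
  have hx' : f x ≤ 0 ↔ ¬ 0 ≤ f x := by rw [not_le, le_iff_lt_or_eq, or_iff_left hx]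
  exact propext (and_congr_right fun _ ↦ hx')

variable {ι : Type*} [Fintype ι] (B : AffineBasis ι ℝ E) {i j : ι} {g : ι → ℝ}

lemma sub_mul_measureReal_simplexSublevel_inter [DecidableEq ι] (hg : g i * g j < 0) :
    (g j - g i) * μ.real
        (simplexSublevel B g ∩ {x | 0 ≤ g j * (B.coord i x * g i + B.coord j x * g j)}) =
      g j * μ.real (simplexSublevel B (Function.update g i 0)) := by
  have hij : i ≠ j := ne_of_apply_ne g (ne_of_mul_neg hg)
  have hdet : (slideVertex B i j (g i / (g i - g j))).linear.det = g j / (g j - g i) := by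
    rw [det_linear_slideVertex B _ hij, one_sub_div (sub_ne_zero.2 (ne_of_mul_neg hg)),
      sub_sub_cancel_left, ← neg_sub (g i), div_neg, neg_div]
  have hpos : 0 < g j / (g j - g i) := (div_sub_mem_Ioo_of_mul_neg (mul_comm (g i) _ ▸ hg)).1
  rw [← slideVertex_preimage_simplexSublevel_inter B hg, measureReal_def, measureReal_def,
    addHaar_preimage_affineMap μ (hdet ▸ hpos.ne'), hdet, abs_of_pos (inv_pos.2 hpos),
    ENNReal.toReal_mul, ENNReal.toReal_ofReal (inv_pos.2 hpos).le, inv_div, ← mul_assoc,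
    mul_div_cancel₀ _ (right_ne_zero_of_mul hg.ne)]

theorem sub_mul_measureReal_simplexSublevel [DecidableEq ι] (hg : g i * g j < 0) :
    (g j - g i) * μ.real (simplexSublevel B g) =
      g j * μ.real (simplexSublevel B (Function.update g i 0)) -
        g i * μ.real (simplexSublevel B (Function.update g j 0)) := by
  let f : E →ᵃ[ℝ] ℝ := g j • (g i • B.coord i + g j • B.coord j)
  have hf (x : E) : f x = g j * (B.coord i x * g i + B.coord j x * g j) := by
    simp [f, mul_comm (g _) (B.coord _ _), mul_add]
  have hsign (x : E) : f x ≤ 0 ↔ 0 ≤ g i * (B.coord j x * g j + B.coord i x * g i) := by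
    rw [hf, add_comm]
    rcases mul_neg_iff.1 hg with ⟨hi, hj⟩ | ⟨hi, hj⟩
    · simp [mul_nonpos_iff, hi, hj.le, hj.not_ge]
    · simp [mul_nonneg_iff, mul_nonpos_iff, hi.le, hj.le, hi.not_ge, hj.not_ge]
  have hij : i ≠ j := ne_of_apply_ne g (ne_of_mul_neg hg)
  have hne : f (B j) ≠ 0 := by
    rw [hf, B.coord_apply_ne hij, B.coord_apply_eq, zero_mul, one_mul, zero_add]
    exact mul_self_ne_zero.2 (right_ne_zero_of_mul hg.ne)
  have hi := sub_mul_measureReal_simplexSublevel_inter μ B hg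
  have hj := sub_mul_measureReal_simplexSublevel_inter μ B (mul_comm (g i) _ ▸ hg)
  have hsplit := measureReal_inter_nonneg_add_inter_nonpos μ ⟨B j, hne⟩
    (isCompact_simplexSublevel B g).measure_ne_top
  simp only [hsign] at hsplit
  simp only [hf] at hsplit
  linear_combination hi - hj - (g j - g i) * hsplit

lemma measureReal_simplexSublevel_eq_zero (hg : ∀ i, 0 ≤ g i) (hj : 0 < g j) :
    μ.real (simplexSublevel B g) = 0 := by
  have hcoord : B.coord j (B j) ≠ 0 := by
    rw [B.coord_apply_eq]
    exact one_ne_zero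
  rw [measureReal_def, measure_mono_null _ (measure_affineMap_fiber_eq_zero μ ⟨B j, hcoord⟩),
    ENNReal.toReal_zero]
  rintro x ⟨hx, hsum⟩
  have hnonneg (i : ι) : 0 ≤ B.coord i x * g i := mul_nonneg (hx i) (hg i)
  have hzero := (Finset.sum_eq_zero_iff_of_nonneg fun i _ ↦ hnonneg i).1
    (hsum.antisymm (Finset.sum_nonneg fun i _ ↦ hnonneg i)) j (Finset.mem_univ j)
  exact (mul_eq_zero.1 hzero).resolve_right hj.ne'

lemma measureReal_simplexSublevel_indicator [DecidableEq ι] {s : ι → ℝ} {t : ℝ} {A : Finset ι}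
    (hiA : i ∈ A) (hjA : j ∈ A) (hi : s i < t) (hj : t < s j) :
    μ.real (simplexSublevel B (indicator A fun k ↦ s k - t)) = (s j - s i)⁻¹ *
      ((s j - t) * μ.real (simplexSublevel B (indicator (A.erase i) fun k ↦ s k - t)) +
        (t - s i) * μ.real (simplexSublevel B (indicator (A.erase j) fun k ↦ s k - t))) := by
  have hupdate (k : ι) : Function.update (indicator (A : Set ι) fun k ↦ s k - t) k 0 =
      indicator (A.erase k) fun k ↦ s k - t := by
    ext l
    rcases eq_or_ne l k with rfl | hlk
    · simp
    · simp [hlk, indicator]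
  have hg : indicator (A : Set ι) (fun k ↦ s k - t) i * indicator (A : Set ι) (fun k ↦ s k - t) j
      < 0 := by
    rw [indicator_of_mem hiA, indicator_of_mem hjA]
    exact mul_neg_of_neg_of_pos (sub_neg.2 hi) (sub_pos.2 hj)
  have hrec := sub_mul_measureReal_simplexSublevel μ B hg
  rw [hupdate, hupdate, indicator_of_mem hiA, indicator_of_mem hjA] at hrec
  rw [eq_inv_mul_iff_mul_eq₀ (sub_pos.2 (hi.trans hj)).ne']
  linear_combination hrec

theorem isPolynomialOn_measureReal_simplexSublevel {a b : ℝ} {s : ι → ℝ}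
    (hs : ∀ i, s i ∉ Ioo a b) (A : Finset ι) :
    IsPolynomialOn (A.card - 1) (Ioo a b) fun t ↦
      μ.real (simplexSublevel B (indicator A fun k ↦ s k - t)) := by
  classical
  induction A using Finset.strongInduction with
  | H A ih =>
    have le_or_ge (i : ι) : s i ≤ a ∨ b ≤ s i := by
      by_contra! h
      exact hs i h
    by_cases! hlow : ∀ j ∈ A, s j ≤ a
    · refine (IsPolynomialOn.const _ _ (μ.real (convexHull ℝ (range B)))).congr fun t ht ↦ ?_
      exact congrArg μ.real (simplexSublevel_of_nonpos B
        (indicator_nonpos fun i hi ↦ sub_nonpos.2 ((hlow i hi).trans ht.1.le)))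
    obtain ⟨j, hjA, hj⟩ := hlow
    have hbj : b ≤ s j := (le_or_ge j).resolve_left hj.not_ge
    by_cases! hhigh : ∀ i ∈ A, b ≤ s i
    · refine (IsPolynomialOn.const _ _ 0).congr fun t ht ↦ ?_
      refine measureReal_simplexSublevel_eq_zero μ B (j := j)
        (indicator_nonneg fun i hi ↦ sub_nonneg.2 (ht.2.le.trans (hhigh i hi))) ?_
      rw [indicator_of_mem hjA]
      exact sub_pos.2 (ht.2.trans_le hbj)
    obtain ⟨i, hiA, hi⟩ := hhigh
    replace hi : s i ≤ a := (le_or_ge i).resolve_right hi.not_ge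
    have hij : i ≠ j := ne_of_apply_ne s (hi.trans_lt hj).ne
    have hcard : 1 < A.card := Finset.one_lt_card.2 ⟨i, hiA, j, hjA, hij⟩
    have hmul (c : ℝ) {k : ι} (hk : k ∈ A) : IsPolynomialOn (A.card - 1) (Ioo a b) fun t ↦
        (t - c) * μ.real (simplexSublevel B (indicator (A.erase k) fun k ↦ s k - t)) := by
      convert (IsPolynomialOn.id_sub_const _ c).mul (ih _ (Finset.erase_ssubset hk)) using 1
      rw [Finset.card_erase_of_mem hk]
      omega
    have hadd := ((hmul (s i) hjA).const_mul (s j - s i)⁻¹).add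
      ((hmul (s j) hiA).const_mul (-(s j - s i)⁻¹))
    refine hadd.congr fun t ht ↦ ?_
    simp only [measureReal_simplexSublevel_indicator μ B hiA hjA (hi.trans_lt ht.1)
      (ht.2.trans_le hbj)]
    ring

end Measure

end Simplex

section Polytope

open Module Set

variable {E : Type*} [NormedAddCommGroup E] [NormedSpace ℝ E] [FiniteDimensional ℝ E]
  [MeasurableSpace E] [BorelSpace E] (μ : Measure E) [μ.IsAddHaarMeasure]

lemma isPolynomialOn_measureReal_simplex_inter {ι : Type*} [Fintype ι] {v : ι → E}
    (hv : AffineIndependent ℝ v) (hcard : Fintype.card ι = finrank ℝ E + 1) (f : E →ᵃ[ℝ] ℝ)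
    {a b : ℝ} (hf : ∀ i, f (v i) ∉ Ioo a b) :
    IsPolynomialOn (finrank ℝ E) (Ioo a b) fun t ↦
      μ.real (convexHull ℝ (range v) ∩ {x | f x ≤ t}) := by
  let B : AffineBasis ι ℝ E :=
    ⟨v, hv, hv.affineSpan_eq_top_iff_card_eq_finrank_add_one.2 hcard⟩
  have h := isPolynomialOn_measureReal_simplexSublevel μ B hf Finset.univ
  simp only [Finset.card_univ, hcard, Nat.add_sub_cancel, Finset.coe_univ, indicator_univ] at h
  exact h.congr fun t _ ↦ congrArg μ.real (simplexSublevel_comp_sub B f t).symm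

lemma isPolynomialOn_Ioo_measureReal_convexHull_inter {ι : Type*} [Finite ι] (v : ι → E)
    (f : E →ᵃ[ℝ] ℝ) {a b : ℝ} (hv : ∀ i, f (v i) ∉ Ioo a b) :
    IsPolynomialOn (finrank ℝ E) (Ioo a b) fun t ↦
      μ.real (convexHull ℝ (range v) ∩ {x | f x ≤ t}) := by
  cases nonempty_fintype ι
  obtain ⟨T, hT, hdisj, hcover⟩ := exists_ae_triangulation μ v
  have hf : Continuous f := AffineMap.continuous_of_finiteDimensional f
  have hcompact (I : Finset ι) (t : ℝ) : IsCompact (convexHull ℝ (v '' I) ∩ {x | f x ≤ t}) :=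
    ((toFinite _).isCompact_convexHull ℝ).inter_right (isClosed_le hf continuous_const)
  have hsum (t : ℝ) : μ.real (convexHull ℝ (range v) ∩ {x | f x ≤ t}) =
      ∑ I ∈ T, μ.real (convexHull ℝ (v '' I) ∩ {x | f x ≤ t}) := by
    rw [measureReal_congr (hcover.inter (ae_eq_refl {x | f x ≤ t})), iUnion₂_inter]
    exact measureReal_biUnion_finset₀
      (hdisj.mono' fun I J h ↦ h.mono inter_subset_left inter_subset_left)
      (fun I _ ↦ (hcompact I t).measurableSet.nullMeasurableSet)
      (fun I _ ↦ (hcompact I t).measure_ne_top)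
  simp only [hsum]
  refine IsPolynomialOn.sum fun I hI ↦ ?_
  have h := isPolynomialOn_measureReal_simplex_inter μ (hT I hI).2
    ((Fintype.card_coe I).trans (hT I hI).1) f (fun i ↦ hv i)
  rw [image_eq_range]
  exact h

lemma continuous_measureReal_inter_le {f : E →ᵃ[ℝ] ℝ} (hf : f.linear ≠ 0) {s : Set E}
    (hs : MeasurableSet s) (hμs : μ s ≠ ⊤) : Continuous fun t ↦ μ.real (s ∩ {x | f x ≤ t}) := by
  have hcont : Continuous f := AffineMap.continuous_of_finiteDimensional f
  have hmeas (t : ℝ) : MeasurableSet (s ∩ {x | f x ≤ t}) :=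
    hs.inter (measurableSet_le hcont.measurable measurable_const)
  rw [continuous_iff_continuousAt]
  intro t
  refine (ENNReal.tendsto_toReal (measure_ne_top_of_subset inter_subset_left hμs)).comp
    (tendsto_measure_of_ae_tendsto_indicator (nhds t) (hmeas t) hmeas hs hμs
      (Filter.Eventually.of_forall fun _ ↦ inter_subset_left) ?_)
  have hne : ∃ x, f x ≠ t := by
    by_contra! h
    refine hf (LinearMap.ext fun x ↦ ?_)
    simpa [h] using f.linearMap_vsub x 0
  filter_upwards [measure_eq_zero_iff_ae_notMem.1 (measure_affineMap_fiber_eq_zero μ hne)] with x hx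
  rcases lt_or_gt_of_ne hx with hlt | hgt
  · filter_upwards [lt_mem_nhds hlt] with r hr
    simp [hr.le, hlt.le]
  · filter_upwards [gt_mem_nhds hgt] with r hr
    simp [hr.not_ge, hgt.not_ge]

theorem stmt10_general {ι : Type*} [Finite ι] (v : ι → E) {f : E →ᵃ[ℝ] ℝ} (hf : f.linear ≠ 0)
    {a b : ℝ} (hv : ∀ i, f (v i) ∉ Ioo a b) :
    IsPolynomialOn (finrank ℝ E) (Icc a b) fun t ↦
      μ.real (convexHull ℝ (range v) ∩ {x | f x ≤ t}) := by
  rcases le_or_gt b a with hba | hab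
  · refine (IsPolynomialOn.const _ _ (μ.real (convexHull ℝ (range v) ∩ {x | f x ≤ a}))).congr
      fun t ht ↦ ?_
    simp only [show t = a by linarith [ht.1, ht.2]]
  · have hC : IsCompact (convexHull ℝ (range v)) := (finite_range v).isCompact_convexHull ℝ
    rw [← closure_Ioo hab.ne]
    exact (isPolynomialOn_Ioo_measureReal_convexHull_inter μ v f hv).closure
      (continuous_measureReal_inter_le μ hf hC.measurableSet hC.measure_ne_top)

end Polytope

theorem stmt10 (k : ℕ) (v : Fin k → E3) (x₀ n : E3) (hn : ‖n‖ = 1) :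
    let C := convexHull ℝ (Set.range v)
    let V : ℝ → ℝ := fun s => (volume (C ∩ {x : E3 | ⟪x - x₀, n⟫ ≤ s})).toReal
    ∀ a b : ℝ, a ≤ b → (∀ i : Fin k, ⟪v i - x₀, n⟫ ∉ Set.Ioo a b) →
      ∃ p : Polynomial ℝ, p.natDegree ≤ 3 ∧
        ∀ t ∈ Set.Icc a b, V t = Polynomial.eval t p := by
  intro _ _ a b _ hv
  let f : E3 →ᵃ[ℝ] ℝ := (innerₗ E3 n).toAffineMap - AffineMap.const ℝ E3 ⟪x₀, n⟫
  have hf (x : E3) : f x = ⟪x - x₀, n⟫ := by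
    simp [f, inner_sub_left, real_inner_comm n x]
  have hlin : f.linear ≠ 0 := fun h ↦ by
    simpa [f, hn] using LinearMap.congr_fun h n
  simp only [← hf] at hv
  have hpoly := stmt10_general volume v hlin hv
  simp only [hf, finrank_euclideanSpace_fin] at hpoly
  exact hpoly
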